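/- Let a propositional CNF instance be given by a finite set X of clauses, a finite set A of variables, and relations pos, neg ⊆ X × A, where clause x is satisfied by a truth assignment S ⊆ A if there is v with (x,v) ∈ pos and v ∈ S, or (x,v) ∈ neg and v ∉ S. Let P_sat be the ground normal logic program consisting of the database facts for c, a, p, n together with the standard translation of: the subset rule s(V) ⊆ a(V) (rules s(v) ← ¬ŝ(v), ŝ(v) ← ¬s(v) for v ∈ A) and the rules f(X) ← p(X,V), s(V) and f(X) ← n(X,V), ¬s(V). Then the stable models of P_sat are in bijection with the truth assignments S ⊆ A, and in the stable model M_S corresponding to S the set {x : f(x) ∈ M_S} is exactly the set of clauses satisfied by S. Consequently, the maximum over all stable models M of |{x : f(x) ∈ M}| equals the maximum number of clauses of the instance that are simultaneously satisfiable by a single truth assignment. -/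

import Mathlib

/-- A ground normal logic program rule: head atom, positive body atoms, negated body atoms. -/
structure Rule (α : Type*) where
  head : α
  pos : Set α
  neg : Set α

/-- A fact is a rule with empty body. -/
def Rule.fact {α : Type*} (a : α) : Rule α := ⟨a, ∅, ∅⟩

/-- `I` is closed under the Gelfond–Lifschitz reduct `P^M`: for every rule of `P` whose
negated body atoms are all outside `M`, if the positive body is contained in `I` then
so is the head. -/
def ClosedUnderReduct {α : Type*} (P : Set (Rule α)) (M I : Set α) : Prop :=
  ∀ r ∈ P, (∀ c ∈ r.neg, c ∉ M) → r.pos ⊆ I → r.head ∈ I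

/-- Least model of the reduct `P^M`: the least set of atoms closed under its rules. -/
def LeastReductModel {α : Type*} (P : Set (Rule α)) (M : Set α) : Set α :=
  ⋂₀ {I | ClosedUnderReduct P M I}

/-- `M` is a stable model of `P` if it equals the least model of the reduct `P^M`. -/
def IsStableModel {α : Type*} (P : Set (Rule α)) (M : Set α) : Prop :=
  M = LeastReductModel P M

/-- Atoms of the max-satisfiability program. -/
inductive SAtom (X A : Type*) where
  | c : X → SAtom X A
  | a : A → SAtom X A
  | p : X → A → SAtom X A
  | n : X → A → SAtom X A
  | s : A → SAtom X A
  | shat : A → SAtom X A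
  | f : X → SAtom X A

/-- Clause `x` is satisfied by the truth assignment `S`. -/
def ClauseSat {X A : Type*} (Ppos Pneg : Set (X × A)) (x : X) (S : Set A) : Prop :=
  ∃ v : A, ((x, v) ∈ Ppos ∧ v ∈ S) ∨ ((x, v) ∈ Pneg ∧ v ∉ S)

/-- The ground program `P_sat`: database facts, the translated subset rule `s(V) ⊆ a(V)`
(`s(v) ← ¬ŝ(v)`, `ŝ(v) ← ¬s(v)`), and the rules `f(X) ← p(X,V), s(V)` and
`f(X) ← n(X,V), ¬s(V)`. -/
def satProgram {X A : Type*} (Ppos Pneg : Set (X × A)) : Set (Rule (SAtom X A)) :=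
  {r | ∃ x : X, r = Rule.fact (SAtom.c x)} ∪
  {r | ∃ v : A, r = Rule.fact (SAtom.a v)} ∪
  {r | ∃ q ∈ Ppos, r = Rule.fact (SAtom.p q.1 q.2)} ∪
  {r | ∃ q ∈ Pneg, r = Rule.fact (SAtom.n q.1 q.2)} ∪
  {r | ∃ v : A, r = ⟨SAtom.s v, ∅, {SAtom.shat v}⟩} ∪
  {r | ∃ v : A, r = ⟨SAtom.shat v, ∅, {SAtom.s v}⟩} ∪
  {r | ∃ (x : X) (v : A), r = ⟨SAtom.f x, {SAtom.p x v, SAtom.s v}, ∅⟩} ∪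
  {r | ∃ (x : X) (v : A), r = ⟨SAtom.f x, {SAtom.n x v}, {SAtom.s v}⟩}

/-- The interpretation corresponding to a truth assignment `S`. -/
def satModel {X A : Type*} (Ppos Pneg : Set (X × A)) (S : Set A) : Set (SAtom X A) :=
  {a | ∃ x : X, a = SAtom.c x} ∪
  {a | ∃ v : A, a = SAtom.a v} ∪
  {a | ∃ q ∈ Ppos, a = SAtom.p q.1 q.2} ∪
  {a | ∃ q ∈ Pneg, a = SAtom.n q.1 q.2} ∪
  (SAtom.s '' S) ∪ (SAtom.shat '' Sᶜ) ∪
  {a | ∃ x : X, ClauseSat Ppos Pneg x S ∧ a = SAtom.f x}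

/-! `P_sat` is tight: only the atoms `f(x)` occur as heads of rules with positive body atoms, and no
`f(y)` is among those body atoms. By Fages' theorem the stable models are therefore the fixed points
of the immediate consequence operator. The fixed-point equations for `s` and `ŝ` say only that
`s(v)` holds exactly when `ŝ(v)` fails, so the set of `v` with `s(v)` true is arbitrary, and it
determines all the remaining atoms. -/

section LogicProgram

variable {α : Type*} {P : Set (Rule α)} {M : Set α}

/-- The body of a rule is true in an interpretation: the positive atoms hold and the negated ones
fail. -/
def Rule.BodyHolds (r : Rule α) (M : Set α) : Prop :=
  r.pos ⊆ M ∧ ∀ c ∈ r.neg, c ∉ M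

/-- The immediate consequence operator of a normal program: the heads of all rules whose body is
true in `M`. -/
def immediateConsequences (P : Set (Rule α)) (M : Set α) : Set α :=
  {a | ∃ r ∈ P, r.head = a ∧ r.BodyHolds M}

/-- Supported models, that is, models of the Clark completion of `P`, encoded as the fixed points
of the immediate consequence operator. -/
def IsSupportedModel (P : Set (Rule α)) (M : Set α) : Prop :=
  M = immediateConsequences P M

/-- Tightness, the hypothesis of Fages' theorem: there is no infinite descent along the positive
dependencies of `P`. For a finite program this is acyclicity of the positive dependency graph. -/
def IsTight (P : Set (Rule α)) : Prop :=
  WellFounded fun b a ↦ ∃ r ∈ P, r.head = a ∧ b ∈ r.pos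

theorem isTight_of_level {β : Type*} [LT β] [WellFoundedLT β] (level : α → β)
    (h : ∀ r ∈ P, ∀ b ∈ r.pos, level b < level r.head) : IsTight P := by
  refine Subrelation.wf ?_ (InvImage.wf level wellFounded_lt)
  rintro b _ ⟨r, hr, rfl, hb⟩
  exact h r hr b hb

theorem closedUnderReduct_self_iff :
    ClosedUnderReduct P M M ↔ immediateConsequences P M ⊆ M := by
  constructor
  · rintro h _ ⟨r, hr, rfl, hpos, hneg⟩
    exact h r hr hneg hpos
  · exact fun h r hr hneg hpos ↦ h ⟨r, hr, rfl, hpos, hneg⟩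

theorem isStableModel_iff_isLeast :
    IsStableModel P M ↔ IsLeast {I | ClosedUnderReduct P M I} M := by
  constructor
  · intro h
    have hlower : M ∈ lowerBounds {I | ClosedUnderReduct P M I} :=
      fun I hI ↦ h.trans_subset (Set.sInter_subset_of_mem hI)
    refine ⟨fun r hr hneg hpos ↦ ?_, hlower⟩
    rw [h]
    exact fun I hI ↦ hI r hr hneg (hpos.trans (hlower hI))
  · exact fun h ↦ h.csInf_eq.symm

theorem IsStableModel.isSupportedModel (h : IsStableModel P M) : IsSupportedModel P M := by
  obtain ⟨hclosed, hleast⟩ := isStableModel_iff_isLeast.1 h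
  have hsub : immediateConsequences P M ⊆ M := closedUnderReduct_self_iff.1 hclosed
  have hconsequences : ClosedUnderReduct P M (immediateConsequences P M) :=
    fun r hr hneg hpos ↦ ⟨r, hr, rfl, hpos.trans hsub, hneg⟩
  exact (hleast hconsequences).antisymm hsub

theorem IsSupportedModel.isStableModel (h : IsSupportedModel P M) (hP : IsTight P) :
    IsStableModel P M := by
  refine isStableModel_iff_isLeast.2
    ⟨closedUnderReduct_self_iff.2 (subset_of_eq h.symm), fun I hI a ha ↦ ?_⟩
  induction a using hP.induction with
  | _ a ih =>
    rw [h] at ha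
    obtain ⟨r, hr, rfl, hpos, hneg⟩ := ha
    exact hI r hr hneg fun b hb ↦ ih b ⟨r, hr, rfl, hb⟩ (hpos hb)

end LogicProgram

section SatProgram

variable {X A : Type*} (Ppos Pneg : Set (X × A))

theorem isTight_satProgram : IsTight (satProgram Ppos Pneg) := by
  refine isTight_of_level (level := fun | .f _ => (1 : ℕ) | _ => 0) ?_
  rintro _ (((((((⟨x, rfl⟩ | ⟨v, rfl⟩) | ⟨q, -, rfl⟩) | ⟨q, -, rfl⟩) | ⟨v, rfl⟩) | ⟨v, rfl⟩) |
    ⟨x, v, rfl⟩) | ⟨x, v, rfl⟩) <;>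
    simp [Rule.fact]

theorem SAtom.set_ext_iff {M N : Set (SAtom X A)} :
    M = N ↔
      (∀ x, .c x ∈ M ↔ .c x ∈ N) ∧ (∀ v, .a v ∈ M ↔ .a v ∈ N) ∧
      (∀ x v, .p x v ∈ M ↔ .p x v ∈ N) ∧ (∀ x v, .n x v ∈ M ↔ .n x v ∈ N) ∧
      (∀ v, .s v ∈ M ↔ .s v ∈ N) ∧ (∀ v, .shat v ∈ M ↔ .shat v ∈ N) ∧
      (∀ x, .f x ∈ M ↔ .f x ∈ N) := by
  refine ⟨by rintro rfl; simp, fun ⟨hc, ha, hp, hn, hs, hshat, hf⟩ ↦ ?_⟩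
  ext (x | v | ⟨x, v⟩ | ⟨x, v⟩ | v | v | x)
  exacts [hc x, ha v, hp x v, hn x v, hs v, hshat v, hf x]

theorem isSupportedModel_satProgram_iff_completion {M : Set (SAtom X A)} :
    IsSupportedModel (satProgram Ppos Pneg) M ↔
      (∀ x, .c x ∈ M) ∧ (∀ v, .a v ∈ M) ∧
      (∀ x v, .p x v ∈ M ↔ (x, v) ∈ Ppos) ∧ (∀ x v, .n x v ∈ M ↔ (x, v) ∈ Pneg) ∧
      (∀ v, .s v ∈ M ↔ .shat v ∉ M) ∧ (∀ v, .shat v ∈ M ↔ .s v ∉ M) ∧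
      (∀ x, .f x ∈ M ↔ ∃ v, (.p x v ∈ M ∧ .s v ∈ M) ∨ (.n x v ∈ M ∧ .s v ∉ M)) := by
  rw [IsSupportedModel, SAtom.set_ext_iff]
  simp [immediateConsequences, satProgram, Rule.BodyHolds, Rule.fact, or_and_right, exists_or,
    Set.insert_subset_iff]

theorem s_mem_satModel {S : Set A} {v : A} : .s v ∈ satModel Ppos Pneg S ↔ v ∈ S := by
  simp [satModel]

theorem f_mem_satModel {S : Set A} {x : X} :
    .f x ∈ satModel Ppos Pneg S ↔ ClauseSat Ppos Pneg x S := by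
  simp [satModel]

theorem isSupportedModel_satModel (S : Set A) :
    IsSupportedModel (satProgram Ppos Pneg) (satModel Ppos Pneg S) := by
  rw [isSupportedModel_satProgram_iff_completion]
  simp [satModel, ClauseSat]

variable {Ppos Pneg} in
theorem IsSupportedModel.eq_satModel {M : Set (SAtom X A)}
    (h : IsSupportedModel (satProgram Ppos Pneg) M) :
    M = satModel Ppos Pneg {v | SAtom.s v ∈ M} := by
  obtain ⟨hc, ha, hp, hn, -, hshat, hf⟩ := (isSupportedModel_satProgram_iff_completion ..).1 h
  rw [SAtom.set_ext_iff]
  simp [satModel, ClauseSat, hc, ha, hp, hn, hshat, hf]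

theorem isStableModel_satModel (S : Set A) :
    IsStableModel (satProgram Ppos Pneg) (satModel Ppos Pneg S) :=
  (isSupportedModel_satModel Ppos Pneg S).isStableModel (isTight_satProgram Ppos Pneg)

theorem isStableModel_satProgram_iff {M : Set (SAtom X A)} :
    IsStableModel (satProgram Ppos Pneg) M ↔ ∃ S, M = satModel Ppos Pneg S := by
  constructor
  · exact fun h ↦ ⟨_, h.isSupportedModel.eq_satModel⟩
  · rintro ⟨S, rfl⟩
    exact isStableModel_satModel Ppos Pneg S

/-- The correspondence between stable models of `P_sat` and truth assignments: a stable model is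
sent to the set of variables it selects. -/
def stableModelEquiv : {M // IsStableModel (satProgram Ppos Pneg) M} ≃ Set A where
  toFun M := {v | SAtom.s v ∈ M.1}
  invFun S := ⟨satModel Ppos Pneg S, isStableModel_satModel Ppos Pneg S⟩
  left_inv M := Subtype.ext M.2.isSupportedModel.eq_satModel.symm
  right_inv _ := Set.ext fun _ ↦ s_mem_satModel Ppos Pneg

end SatProgram

-- Since `ncard` and `sSup` take junk values when `X` is infinite, the last clause compares the
-- families of attained clause sets instead of their maximal cardinalities.
theorem stmt10_general {X A : Type*} (Ppos Pneg : Set (X × A)) :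
    (∀ M : Set (SAtom X A), IsStableModel (satProgram Ppos Pneg) M ↔
      ∃ S : Set A, M = satModel Ppos Pneg S) ∧
    Nonempty ({M : Set (SAtom X A) // IsStableModel (satProgram Ppos Pneg) M} ≃ Set A) ∧
    (∀ S : Set A, {x : X | SAtom.f x ∈ satModel Ppos Pneg S} =
      {x : X | ClauseSat Ppos Pneg x S}) ∧
    (fun M ↦ {x : X | SAtom.f x ∈ M}) '' {M | IsStableModel (satProgram Ppos Pneg) M} =
      Set.range fun S ↦ {x : X | ClauseSat Ppos Pneg x S} := by
  have hf (S : Set A) : {x : X | SAtom.f x ∈ satModel Ppos Pneg S} =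
      {x : X | ClauseSat Ppos Pneg x S} := Set.ext fun _ ↦ f_mem_satModel Ppos Pneg
  have hstable : {M | IsStableModel (satProgram Ppos Pneg) M} = Set.range (satModel Ppos Pneg) :=
    Set.ext fun _ ↦ (isStableModel_satProgram_iff Ppos Pneg).trans (by simp [eq_comm])
  refine ⟨fun _ ↦ isStableModel_satProgram_iff Ppos Pneg, ⟨stableModelEquiv Ppos Pneg⟩, hf, ?_⟩
  rw [hstable, ← Set.range_comp]
  exact congrArg Set.range (funext hf)

theorem stmt10 {X A : Type*} [Fintype X] [Fintype A] (Ppos Pneg : Set (X × A)) :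
    (∀ M : Set (SAtom X A), IsStableModel (satProgram Ppos Pneg) M ↔
      ∃ S : Set A, M = satModel Ppos Pneg S) ∧
    Nonempty ({M : Set (SAtom X A) // IsStableModel (satProgram Ppos Pneg) M} ≃ Set A) ∧
    (∀ S : Set A, {x : X | SAtom.f x ∈ satModel Ppos Pneg S} =
      {x : X | ClauseSat Ppos Pneg x S}) ∧
    (sSup {k : ℕ | ∃ M : Set (SAtom X A), IsStableModel (satProgram Ppos Pneg) M ∧
        {x : X | SAtom.f x ∈ M}.ncard = k} =
      sSup {k : ℕ | ∃ S : Set A, {x : X | ClauseSat Ppos Pneg x S}.ncard = k}) := by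
  obtain ⟨hstable, hequiv, hf, hfamilies⟩ := stmt10_general Ppos Pneg
  exact ⟨hstable, hequiv, hf, by
    simpa [Set.image, Set.range] using congrArg (fun F ↦ sSup (Set.ncard '' F)) hfamilies⟩
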